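/- arXiv:2207.00766 — 2 statements merged into one kernel-verified Lean document; each statement's English description precedes it below -/
import Mathlib

section
/- Fix an integer q ≥ 2. Let (h_k)_{k≥0} be the sequence of rational numbers defined by h_0 = 1 and, for k ≥ 1, by the recurrence h_k = ((q-1)k+1)/k · Σ h_{j_1}·h_{j_2}·…·h_{j_q}, where the sum runs over all q-tuples (j_1,…,j_q) of nonnegative integers with j_1 + … + j_q = k−1. Then for every k ≥ 0 one has h_k = q^k·((q-1)k+1)^{k-1}/k!. -/
/-!
The Abel polynomials `Aₙ(x) = x (x + p n)ⁿ⁻¹ / n!` satisfy `Aₙ₊₁'(x) = Aₙ(x + p)` and, for `n ≥ 1`,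
`Aₙ(0) = 0`. This forces the binomial convolution `∑ Aᵢ(x) Aⱼ(y) = Aₙ(x + y)`, that is, their
generating series at `x` behaves like an exponential in `x`. The `q`-fold convolution of `Aₖ(1)` is
therefore `Aₖ(q)`, which for `q = 1 + p` is a multiple of `Aₖ₊₁(1)`. So `qᵏ Aₖ(1)` solves the
recurrence, whose solution is unique.
-/

open Polynomial Finset
open scoped PowerSeries

section Recurrence

variable {R : Type*} [CommSemiring R]

theorem coeff_pow_eq_sum_antidiagonalTuple (φ : R⟦X⟧) (m n : ℕ) :
    PowerSeries.coeff n (φ ^ m) =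
      ∑ j ∈ Nat.antidiagonalTuple m n, ∏ i, PowerSeries.coeff (j i) φ := by
  rw [← Fin.prod_const, PowerSeries.coeff_prod]
  refine sum_equiv Finsupp.equivFunOnFinite (fun l ↦ ?_) fun l _ ↦ rfl
  simp [Nat.mem_antidiagonalTuple]

theorem le_of_mem_antidiagonalTuple {m n : ℕ} {j : Fin m → ℕ}
    (hj : j ∈ Nat.antidiagonalTuple m n) (i : Fin m) : j i ≤ n := by
  rw [← Nat.mem_antidiagonalTuple.1 hj]
  exact single_le_sum_of_canonicallyOrdered (mem_univ i)

theorem eq_of_antidiagonalTuple_recurrence {m : ℕ} {w f g : ℕ → R} (h_zero : f 0 = g 0)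
    (hf : ∀ k, f (k + 1) = w k * ∑ j ∈ Nat.antidiagonalTuple m k, ∏ i, f (j i))
    (hg : ∀ k, g (k + 1) = w k * ∑ j ∈ Nat.antidiagonalTuple m k, ∏ i, g (j i)) : f = g := by
  funext k
  induction k using Nat.strong_induction_on with
  | _ k ih =>
    cases k with
    | zero => exact h_zero
    | succ k =>
      rw [hf, hg]
      congr 1
      refine sum_congr rfl fun j hj ↦ prod_congr rfl fun i _ ↦ ih _ ?_
      exact Nat.lt_succ_of_le (le_of_mem_antidiagonalTuple hj i)

end Recurrence

section DerivativeUniqueness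

variable {R : Type*} [Ring R] [IsAddTorsionFree R]

theorem eq_of_derivative_eq_of_eval_zero_eq {f g : R[X]}
    (h_derivative : derivative f = derivative g) (h_eval : f.eval 0 = g.eval 0) : f = g := by
  have h_const : f - g = C ((f - g).coeff 0) :=
    eq_C_of_derivative_eq_zero (by rw [derivative_sub, h_derivative, sub_self])
  rw [← sub_eq_zero, h_const, coeff_zero_eq_eval_zero, eval_sub, h_eval, sub_self, C_0]

end DerivativeUniqueness

section Abel

variable {K : Type*} [Field K]

/-- The divided Abel polynomials `x (x + p n)ⁿ⁻¹ / n!`, a sequence of binomial type. The case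
`n = 0`, where `(x + p n)ⁿ⁻¹ = x⁻¹` is not a polynomial, is given separately. -/
noncomputable def abelPoly (p : K) : ℕ → K[X]
  | 0 => 1
  | n + 1 => C ((n + 1).factorial : K)⁻¹ * X * (X + C (p * (n + 1))) ^ n

@[simp]
theorem abelPoly_zero (p : K) : abelPoly p 0 = 1 := rfl

theorem abelPoly_succ (p : K) (n : ℕ) :
    abelPoly p (n + 1) = C ((n + 1).factorial : K)⁻¹ * X * (X + C (p * (n + 1))) ^ n := rfl

theorem eval_abelPoly_succ (p x : K) (n : ℕ) :
    (abelPoly p (n + 1)).eval x = x * (x + p * (n + 1)) ^ n / (n + 1).factorial := by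
  simp only [abelPoly_succ, eval_mul, eval_pow, eval_add, eval_C, eval_X]
  ring

@[simp]
theorem eval_zero_abelPoly_succ (p : K) (n : ℕ) : (abelPoly p (n + 1)).eval 0 = 0 := by
  rw [eval_abelPoly_succ, zero_mul, zero_div]

theorem eval_one_abelPoly (p : K) (n : ℕ) :
    (abelPoly p n).eval 1 = (p * n + 1) ^ (n - 1) / n.factorial := by
  cases n with
  | zero => simp
  | succ n => rw [eval_abelPoly_succ, Nat.add_sub_cancel, Nat.cast_succ, one_mul, add_comm 1]

/-- The generating series `∑ Aₙ(x) tⁿ` of the divided Abel polynomials at a point `x`. -/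
noncomputable def abelSeries (p x : K) : K⟦X⟧ :=
  PowerSeries.mk fun n ↦ (abelPoly p n).eval x

@[simp]
theorem coeff_abelSeries (p x : K) (n : ℕ) :
    PowerSeries.coeff n (abelSeries p x) = (abelPoly p n).eval x :=
  PowerSeries.coeff_mk _ _

theorem abelSeries_zero (p : K) : abelSeries p 0 = 1 := by
  ext n
  cases n <;> simp [PowerSeries.coeff_one]

variable [CharZero K]

theorem derivative_abelPoly_succ (p : K) (n : ℕ) :
    derivative (abelPoly p (n + 1)) = taylor p (abelPoly p n) := by
  cases n with
  | zero => simp [abelPoly_succ]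
  | succ n =>
    apply Polynomial.funext
    intro x
    have h_shift : x + p + p * ((n : K) + 1) = x + p * (n + 1 + 1) := by ring
    have h_ne : (n : K) + 1 + 1 ≠ 0 := by exact_mod_cast (n + 1).succ_ne_zero
    have h_derivative : (derivative (abelPoly p (n + 2))).eval x =
        ((x + p * (n + 1 + 1)) ^ (n + 1) + x * ((n + 1) * (x + p * (n + 1 + 1)) ^ n)) /
          (n + 2).factorial := by
      rw [abelPoly_succ, mul_assoc, derivative_C_mul, derivative_mul, derivative_X,
        derivative_X_add_C_pow]
      simp only [eval_mul, eval_add, eval_pow, eval_C, eval_X, one_mul, Nat.add_sub_cancel]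
      push_cast
      ring
    rw [h_derivative, taylor_eval, eval_abelPoly_succ, h_shift, Nat.factorial_succ (n + 1)]
    push_cast
    field_simp
    ring

theorem sum_antidiagonal_abelPoly_mul_C_eval (p y : K) (n : ℕ) :
    ∑ ij ∈ antidiagonal n, abelPoly p ij.1 * C ((abelPoly p ij.2).eval y) =
      taylor y (abelPoly p n) := by
  induction n with
  | zero => simp
  | succ n ih =>
    apply eq_of_derivative_eq_of_eval_zero_eq
    · calc
        derivative (∑ ij ∈ antidiagonal (n + 1), abelPoly p ij.1 * C ((abelPoly p ij.2).eval y))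
        _ = ∑ ij ∈ antidiagonal n, taylor p (abelPoly p ij.1) * C ((abelPoly p ij.2).eval y) := by
          simp [Nat.sum_antidiagonal_succ, derivative_abelPoly_succ]
        _ = taylor p (taylor y (abelPoly p n)) := by simp [← ih, taylor_mul]
        _ = taylor y (derivative (abelPoly p (n + 1))) := by
          rw [derivative_abelPoly_succ, taylor_taylor, taylor_taylor, add_comm]
        _ = derivative (taylor y (abelPoly p (n + 1))) := by simp [taylor_apply, derivative_comp]
    · simp [Nat.sum_antidiagonal_succ, eval_finsetSum, taylor_eval]

theorem mul_eval_abelPoly_succ (p x : K) (n : ℕ) :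
    (x + p) * (n + 1) * (abelPoly p (n + 1)).eval x =
      x * (x + p * (n + 1)) * (abelPoly p n).eval (x + p) := by
  cases n with
  | zero =>
    rw [eval_abelPoly_succ, abelPoly_zero, eval_one, zero_add, Nat.factorial_one]
    push_cast
    ring
  | succ n =>
    have h_shift : x + p + p * ((n : K) + 1) = x + p * (n + 1 + 1) := by ring
    have h_ne : (n : K) + 1 + 1 ≠ 0 := by exact_mod_cast (n + 1).succ_ne_zero
    rw [eval_abelPoly_succ, eval_abelPoly_succ, h_shift, Nat.factorial_succ (n + 1)]
    push_cast
    field_simp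
    ring

theorem abelSeries_mul (p x y : K) :
    abelSeries p x * abelSeries p y = abelSeries p (x + y) := by
  ext n
  have h_eval := congrArg (eval x) (sum_antidiagonal_abelPoly_mul_C_eval p y n)
  simpa [PowerSeries.coeff_mul, eval_finsetSum, taylor_eval] using h_eval

theorem abelSeries_pow (p x : K) (m : ℕ) : abelSeries p x ^ m = abelSeries p (m * x) := by
  induction m with
  | zero => simp [abelSeries_zero]
  | succ m ih =>
    rw [pow_succ, ih, abelSeries_mul, Nat.cast_succ, add_one_mul]

theorem coeff_succ_rescale_abelSeries_one (p k : ℕ) :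
    PowerSeries.coeff (k + 1) (PowerSeries.rescale ((p + 1 : ℕ) : K) (abelSeries p 1)) =
      ((p * (k + 1) + 1 : ℕ) : K) / ((k + 1 : ℕ) : K) *
        PowerSeries.coeff k
          (PowerSeries.rescale ((p + 1 : ℕ) : K) (abelSeries p 1) ^ (p + 1)) := by
  have h_step := mul_eval_abelPoly_succ (p : K) 1 k
  have h_ne : (k : K) + 1 ≠ 0 := by exact_mod_cast k.succ_ne_zero
  rw [← map_pow, abelSeries_pow, PowerSeries.coeff_rescale, PowerSeries.coeff_rescale,
    coeff_abelSeries, coeff_abelSeries]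
  push_cast
  rw [mul_one, add_comm (p : K) 1]
  field_simp
  linear_combination (1 + (p : K)) ^ k * h_step

end Abel

theorem stmt_0_general {K : Type*} [Field K] [CharZero K] (q : ℕ) (hq : 1 ≤ q) (h : ℕ → K)
    (h0 : h 0 = 1)
    (hrec : ∀ k : ℕ, 1 ≤ k →
      h k = ((((q - 1) * k + 1 : ℕ) : K) / (k : K)) *
        ∑ j ∈ Finset.Nat.antidiagonalTuple q (k - 1), ∏ i : Fin q, h (j i)) :
    ∀ k : ℕ,
      h k = (q : K) ^ k * (((q - 1) * k + 1 : ℕ) : K) ^ (k - 1) / (Nat.factorial k : K) := by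
  obtain ⟨p, rfl⟩ := Nat.exists_eq_add_of_le' hq
  have h_eq : h = fun k ↦
      PowerSeries.coeff k (PowerSeries.rescale ((p + 1 : ℕ) : K) (abelSeries p 1)) := by
    refine eq_of_antidiagonalTuple_recurrence (by simp [h0])
      (fun k ↦ hrec (k + 1) k.succ_pos) fun k ↦ ?_
    rw [coeff_succ_rescale_abelSeries_one, coeff_pow_eq_sum_antidiagonalTuple, Nat.add_sub_cancel]
  intro k
  rw [h_eq]
  simp only [PowerSeries.coeff_rescale, coeff_abelSeries, eval_one_abelPoly, Nat.add_sub_cancel]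
  push_cast
  ring

/-- For a fixed integer `q ≥ 2`, the sequence `h : ℕ → ℚ` with `h 0 = 1`
and, for `k ≥ 1`,
`h k = ((q-1)k+1)/k · ∑_{j₁+⋯+j_q = k-1} h j₁ ⋯ h j_q`
satisfies `h k = q^k ((q-1)k+1)^(k-1) / k!` for every `k ≥ 0`. -/
theorem stmt_0 (q : ℕ) (hq : 2 ≤ q) (h : ℕ → ℚ)
    (h0 : h 0 = 1)
    (hrec : ∀ k : ℕ, 1 ≤ k →
      h k = ((((q - 1) * k + 1 : ℕ) : ℚ) / (k : ℚ)) *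
        ∑ j ∈ Finset.Nat.antidiagonalTuple q (k - 1), ∏ i : Fin q, h (j i)) :
    ∀ k : ℕ,
      h k = (q : ℚ) ^ k * (((q - 1) * k + 1 : ℕ) : ℚ) ^ (k - 1) / (Nat.factorial k : ℚ) :=
  stmt_0_general q (one_le_two.trans hq) h h0 hrec
end

section
/- Fix an integer q ≥ 2 and define the formal power series H ∈ ℚ[[z]] by H = Σ_{k≥0} h_k z^k with h_k = q^k·((q-1)k+1)^{k-1}/k! (so h_0 = 1). Then H satisfies the Pólya-type equation H = exp(F), where F = q·z·H^{q-1} is a formal power series with zero constant term and exp(F) = Σ_{n≥0} F^n/n!. -/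
open PowerSeries

/-- The formal exponential `exp F = ∑_{n≥0} Fⁿ/n!` of a formal power series `F ∈ ℚ[[z]]`
with zero constant term, given coefficient-wise: since `F` has zero constant term,
only the terms with `m ≤ n` contribute to the `n`-th coefficient. -/
noncomputable def expPS (F : PowerSeries ℚ) : PowerSeries ℚ :=
  PowerSeries.mk fun n =>
    ∑ m ∈ Finset.range (n + 1), (PowerSeries.coeff n (F ^ m)) / (Nat.factorial m : ℚ)

/-!
Put `B_x = ∑ x (x + n a)^(n - 1) zⁿ / n!` and `G_y = ∑ (y + n a)ⁿ zⁿ / n!`. Abel's generalization of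
the binomial theorem says `B_x G_y = G_{x + y}`, and `B_x' = x G_{x + a}` holds coefficientwise, so
`B_x` solves the linear equation `B_x' = x G_a B_x` with constant term `1`. As `(z B_a)' = G_a`, the
series `exp (x z B_a)` solves it too, and `B_x ^ m` solves the equation of `B_{m x}`. Hence
`B_x = exp (x z B_a)` and `B_x ^ m = B_{m x}`. With `x = c` and `a = p c` this reads
`B_c = exp (c z B_c ^ p)`, where `B_c = ∑ c^n (p n + 1)^(n - 1) zⁿ / n!`.
-/

open Finset
open scoped Nat

theorem choose_mul_choose_sub_comm (n j k : ℕ) :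
    n.choose k * (n - k).choose j = n.choose j * (n - j).choose k := by
  have hj := Nat.choose_mul (n := n) (Nat.le_add_right j k)
  have hk := Nat.choose_mul (n := n) (Nat.le_add_left k j)
  rw [Nat.add_sub_cancel_left] at hj
  rw [Nat.add_sub_cancel, ← Nat.choose_symm_add] at hk
  exact hk.symm.trans hj

section AbelIdentity

variable {R : Type*}

/-- The value `x (x + n a) ^ (n - 1)` at `x` of the `n`-th Abel polynomial (with parameter `-a` in
the usual sign convention), read as `1` for `n = 0`. For fixed `a` this is a sequence of binomial
type in `x`, which makes its exponential generating function an exponential in `x`. -/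
def abelEval [CommSemiring R] (a x : R) : ℕ → R
  | 0 => 1
  | n + 1 => x * (x + (n + 1) * a) ^ n

theorem abelEval_mul_pow [CommSemiring R] (a x : R) {k l n : ℕ} (h : k + l = n + 1) :
    abelEval a x k * (x + k * a) ^ l = x * (x + k * a) ^ n := by
  cases k with
  | zero => simp [abelEval, show l = n + 1 by omega, pow_succ']
  | succ k =>
    obtain rfl : n = k + l := by omega
    simp [abelEval, pow_add, mul_assoc]

variable [CommRing R]

theorem sum_neg_one_pow_mul_choose_mul_add_mul_pow (a x : R) {m n : ℕ} (h : m < n) :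
    ∑ k ∈ range (n + 1), (-1) ^ (n - k) * n.choose k * (x + k * a) ^ m = 0 := by
  let P : Polynomial R := (.C a * .X + .C x) ^ m
  have hP : P.natDegree < n :=
    (Polynomial.natDegree_pow_le_of_le m Polynomial.natDegree_linear_le).trans_lt (by simpa)
  have hdiff := congrFun (Polynomial.fwdDiff_iter_eq_zero_of_degree_lt hP) 0
  rw [fwdDiff_iter_eq_sum_shift] at hdiff
  simpa [P, add_comm, mul_comm a] using hdiff

theorem sum_choose_mul_abelEval_mul_neg_pow (a x : R) (n : ℕ) :
    ∑ k ∈ range (n + 1), n.choose k * abelEval a x k * (-(x + k * a)) ^ (n - k) =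
      if n = 0 then 1 else 0 := by
  cases n with
  | zero => simp [abelEval]
  | succ n =>
    rw [if_neg n.succ_ne_zero, ← mul_zero x,
      ← sum_neg_one_pow_mul_choose_mul_add_mul_pow a x n.lt_succ_self, mul_sum]
    refine sum_congr rfl fun k hk => ?_
    have hpow := abelEval_mul_pow a x (Nat.add_sub_of_le (mem_range_succ_iff.mp hk))
    rw [neg_pow]
    linear_combination ((n + 1).choose k : R) * (-1) ^ (n + 1 - k) * hpow

-- In powers of `w = x + y + n a`, the coefficient of `w ^ j` is an `(n - j)`-th finite difference
-- of a polynomial of degree `n - j - 1`, so only `w ^ n` survives.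
theorem abel_binomial (a x y : R) (n : ℕ) :
    ∑ k ∈ range (n + 1), n.choose k * abelEval a x k * (y + (n - k : ℕ) * a) ^ (n - k) =
      (x + y + n * a) ^ n := by
  set w := x + y + n * a with hw
  calc
    _ = ∑ k ∈ range (n + 1), ∑ j ∈ range (n - k + 1), w ^ j * n.choose j *
          ((n - j).choose k * abelEval a x k * (-(x + k * a)) ^ (n - j - k)) := by
      refine sum_congr rfl fun k hk => ?_
      have hkn : k ≤ n := mem_range_succ_iff.mp hk
      have hy : y + (n - k : ℕ) * a = w + -(x + k * a) := by
        rw [hw, Nat.cast_sub hkn]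
        ring
      rw [hy, add_pow, mul_sum]
      refine sum_congr rfl fun j _ => ?_
      have hchoose : (n.choose k : R) * (n - k).choose j = n.choose j * (n - j).choose k := by
        rw [← Nat.cast_mul, choose_mul_choose_sub_comm, Nat.cast_mul]
      rw [Nat.sub_right_comm n k j]
      linear_combination w ^ j * abelEval a x k * (-(x + k * a)) ^ (n - j - k) * hchoose
    _ = ∑ j ∈ range (n + 1), w ^ j * n.choose j * ∑ k ∈ range (n - j + 1),
          (n - j).choose k * abelEval a x k * (-(x + k * a)) ^ (n - j - k) := by
      simp only [mul_sum]
      exact sum_comm' (by grind)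
    _ = w ^ n := by
      rw [sum_eq_single_of_mem n (by simp)]
      · simp [abelEval]
      · intro j hj hjn
        rw [sum_choose_mul_abelEval_mul_neg_pow, if_neg (by grind), mul_zero]

end AbelIdentity

theorem eq_of_derivative_eq_mul {R : Type*} [CommRing R] [IsAddTorsionFree R] {f g h : R⟦X⟧}
    (hf : d⁄dX R f = h * f) (hg : d⁄dX R g = h * g)
    (h₀ : constantCoeff f = constantCoeff g) : f = g := by
  ext n
  induction n using Nat.strong_induction_on with
  | h n ih =>
    cases n with
    | zero => simpa using h₀
    | succ n =>
      have hderiv : coeff n (d⁄dX R f) = coeff n (d⁄dX R g) := by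
        rw [hf, hg, coeff_mul, coeff_mul]
        refine sum_congr rfl fun ij hij => ?_
        have hsum : ij.1 + ij.2 = n := mem_antidiagonal.mp hij
        rw [ih ij.2 (by omega)]
      rw [coeff_derivative, coeff_derivative, ← Nat.cast_succ, mul_comm, ← nsmul_eq_mul, mul_comm,
        ← nsmul_eq_mul] at hderiv
      exact (smul_right_inj n.succ_ne_zero).mp hderiv

theorem coeff_subst_eq_sum_range {R S : Type*} [CommRing R] [CommRing S] [Algebra R S] {f : R⟦X⟧}
    {g : S⟦X⟧} (hg : constantCoeff g = 0) (n : ℕ) :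
    coeff n (f.subst g) = ∑ m ∈ range (n + 1), coeff m f • coeff n (g ^ m) := by
  rw [coeff_subst' (.of_constantCoeff_zero' hg)]
  refine finsum_eq_sum_of_support_subset _ fun m hm => ?_
  by_contra hmn
  have hdvd : X ^ m ∣ g ^ m := pow_dvd_pow_of_dvd (X_dvd_iff.mpr hg) m
  exact hm (by simp [X_pow_dvd_iff.mp hdvd n (by simpa using hmn)])

section ExponentialGeneratingFunction

variable {A : Type*} [CommRing A] [Algebra ℚ A]

/-- The exponential generating function `∑ f n zⁿ / n!` of a sequence `f`, turning binomial
convolution of sequences into multiplication and the shift into differentiation. -/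
noncomputable def egf (f : ℕ → A) : A⟦X⟧ :=
  mk fun n => (n ! : ℚ)⁻¹ • f n

@[simp]
theorem coeff_egf (f : ℕ → A) (n : ℕ) : coeff n (egf f) = (n ! : ℚ)⁻¹ • f n :=
  coeff_mk n _

@[simp]
theorem constantCoeff_egf (f : ℕ → A) : constantCoeff (egf f) = f 0 := by
  simp [← coeff_zero_eq_constantCoeff_apply]

theorem C_mul_egf (c : A) (f : ℕ → A) : C c * egf f = egf fun n => c * f n := by
  ext n
  simp

theorem egf_mul_egf (f g : ℕ → A) :
    egf f * egf g = egf fun n => ∑ k ∈ range (n + 1), n.choose k * f k * g (n - k) := by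
  ext n
  rw [coeff_mul, Nat.sum_antidiagonal_eq_sum_range_succ_mk, coeff_egf, smul_sum]
  refine sum_congr rfl fun k hk => ?_
  have hfact : (k ! : ℚ)⁻¹ * ((n - k)! : ℚ)⁻¹ = (n ! : ℚ)⁻¹ * n.choose k := by
    rw [Nat.cast_choose ℚ (mem_range_succ_iff.mp hk)]
    field_simp
  rw [coeff_egf, coeff_egf, smul_mul_smul_comm, hfact, mul_smul, Nat.cast_smul_eq_nsmul,
    nsmul_eq_mul, mul_assoc]

theorem derivative_egf (f : ℕ → A) : d⁄dX A (egf f) = egf fun n => f (n + 1) := by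
  ext n
  have hfact : ((n + 1 : ℕ) : ℚ) * ((n + 1)! : ℚ)⁻¹ = (n ! : ℚ)⁻¹ := by
    rw [Nat.factorial_succ]
    push_cast
    field_simp
  rw [coeff_derivative, coeff_egf, coeff_egf, ← hfact, mul_smul, Nat.cast_smul_eq_nsmul,
    nsmul_eq_mul, mul_comm, Nat.cast_succ]

theorem derivative_X_mul_egf (f : ℕ → A) :
    d⁄dX A (X * egf f) = egf fun n => (n + 1) * f n := by
  ext n
  rw [coeff_derivative, coeff_succ_X_mul, coeff_egf, coeff_egf, smul_mul_assoc, mul_comm (f n)]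

end ExponentialGeneratingFunction

section AbelSeries

variable {A : Type*} [CommRing A] [Algebra ℚ A]

theorem egf_abelEval_mul_egf_pow (a x y : A) :
    egf (abelEval a x) * egf (fun n => (y + n * a) ^ n) = egf fun n => (x + y + n * a) ^ n := by
  simp only [egf_mul_egf, abel_binomial]

theorem derivative_egf_abelEval (a x : A) :
    d⁄dX A (egf (abelEval a x)) =
      C x * egf (fun n => (a + n * a) ^ n) * egf (abelEval a x) := by
  rw [mul_assoc, mul_comm (egf _), egf_abelEval_mul_egf_pow, derivative_egf, C_mul_egf]
  congr 1 with n
  simp only [abelEval]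
  ring

theorem derivative_X_mul_egf_abelEval_self (a : A) :
    d⁄dX A (X * egf (abelEval a a)) = egf fun n => (a + n * a) ^ n := by
  rw [derivative_X_mul_egf]
  congr 1 with n
  cases n with
  | zero => simp [abelEval]
  | succ n =>
    simp only [abelEval]
    push_cast
    ring

theorem egf_abelEval_pow (a x : A) (m : ℕ) :
    egf (abelEval a x) ^ m = egf (abelEval a (m * x)) := by
  have : IsAddTorsionFree A := .of_module_rat A
  refine eq_of_derivative_eq_mul ?_ (derivative_egf_abelEval a (m * x)) (by simp [abelEval])
  rw [derivative_pow, derivative_egf_abelEval]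
  cases m with
  | zero => simp
  | succ m =>
    simp only [map_mul, map_natCast, Nat.add_sub_cancel]
    ring

theorem egf_abelEval_eq_exp_subst (a x : A) :
    egf (abelEval a x) = (exp A).subst (C x * X * egf (abelEval a a)) := by
  have : IsAddTorsionFree A := .of_module_rat A
  have hconst : constantCoeff (C x * X * egf (abelEval a a)) = 0 := by simp
  have hsubst : HasSubst (C x * X * egf (abelEval a a)) := .of_constantCoeff_zero' hconst
  refine eq_of_derivative_eq_mul (derivative_egf_abelEval a x) ?_ ?_
  · rw [derivative_subst hsubst, derivative_exp, mul_assoc (C x), Derivation.leibniz,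
      derivative_C, derivative_X_mul_egf_abelEval_self]
    simp [mul_comm]
  · rw [← coeff_zero_eq_constantCoeff_apply, ← coeff_zero_eq_constantCoeff_apply,
      coeff_subst_eq_sum_range hconst]
    simp [abelEval]

theorem egf_abelEval_natCast_mul (c : A) (p : ℕ) :
    egf (abelEval (p * c) c) = egf fun k => c ^ k * (p * k + 1) ^ (k - 1) := by
  congr 1 with k
  cases k with
  | zero => simp [abelEval]
  | succ k =>
    have hbase : c + (k + 1) * (p * c) = c * (p * (k + 1) + 1) := by ring
    simp only [abelEval, hbase, mul_pow]
    push_cast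
    ring

theorem stmt_3_general (c : A) (p : ℕ) (H : A⟦X⟧)
    (hH : H = egf fun k => c ^ k * (p * k + 1) ^ (k - 1)) :
    constantCoeff (C c * X * H ^ p) = 0 ∧ H = (exp A).subst (C c * X * H ^ p) := by
  refine ⟨by simp, ?_⟩
  rw [hH, ← egf_abelEval_natCast_mul, egf_abelEval_pow]
  exact egf_abelEval_eq_exp_subst (p * c) c

end AbelSeries

theorem expPS_eq_exp_subst {F : ℚ⟦X⟧} (hF : constantCoeff F = 0) :
    expPS F = (exp ℚ).subst F := by
  ext n
  simp [expPS, coeff_subst_eq_sum_range hF, div_eq_inv_mul]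

/-- For `q ≥ 2`, the power series `H = ∑ h_k z^k` with
`h_k = q^k ((q-1)k+1)^(k-1)/k!` satisfies the Pólya-type equation `H = exp(q·z·H^(q-1))`,
where `F = q·z·H^(q-1)` has zero constant term. -/
theorem stmt_3 (q : ℕ) (hq : 2 ≤ q)
    (H : PowerSeries ℚ)
    (hH : H = PowerSeries.mk fun k =>
      (q : ℚ) ^ k * (((q - 1) * k + 1 : ℕ) : ℚ) ^ (k - 1) / (Nat.factorial k : ℚ)) :
    PowerSeries.constantCoeff ((q : PowerSeries ℚ) * PowerSeries.X * H ^ (q - 1)) = 0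
      ∧ H = expPS ((q : PowerSeries ℚ) * PowerSeries.X * H ^ (q - 1)) := by
  obtain ⟨hconst, hexp⟩ := stmt_3_general (q : ℚ) (q - 1) H (by simp [hH, egf, div_eq_inv_mul])
  rw [map_natCast] at hconst hexp
  exact ⟨hconst, hexp.trans (expPS_eq_exp_subst hconst).symm⟩
end
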